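/- arXiv:2602.07368 — 5 statements merged into one kernel-verified Lean document; each statement's English description precedes it below -/
import Mathlib

section
/- Let C be an abelian category and let σ : X → Y be a morphism between projective objects of C. Then the class D_σ is closed under epimorphic images (quotients), under extensions, and under products (for products that exist in C). -/
open CategoryTheory Limits

universe w v u

/-- For a morphism `σ : X ⟶ Y` in a category `C`, `DClass σ` is the class of objects `L`
such that `Hom_C(σ, L) : Hom_C(Y, L) → Hom_C(X, L)` is surjective. -/
def DClass {C : Type u} [Category.{v} C] {X Y : C} (σ : X ⟶ Y) (L : C) : Prop :=
  Function.Surjective (fun g : Y ⟶ L => σ ≫ g)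

/-- Let `C` be an abelian category and `σ : X ⟶ Y` a morphism between projective
objects of `C`. Then the class `D_σ` is closed under epimorphic images, under extensions, and
under all products that exist in `C`. -/
theorem stmt2 {C : Type u} [Category.{v} C] [Abelian C] {X Y : C} (σ : X ⟶ Y)
    (hX : Projective X) (hY : Projective Y) :
    (∀ (L L' : C) (f : L ⟶ L'), Epi f → DClass σ L → DClass σ L') ∧
    (∀ (S : ShortComplex C), S.ShortExact → DClass σ S.X₁ → DClass σ S.X₃ → DClass σ S.X₂) ∧
    (∀ (I : Type w) (f : I → C) (c : Fan f), IsLimit c → (∀ j, DClass σ (f j)) →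
      DClass σ c.pt) := by
  refine ⟨?_, ?_, ?_⟩
  · intro L L' f hf hL h
    obtain ⟨g, hg⟩ := hL (Projective.factorThru h f)
    refine ⟨g ≫ f, ?_⟩
    dsimp only at hg ⊢
    rw [← Category.assoc, hg, Projective.factorThru_comp]
  · intro S hS h1 h3 h
    have hm := hS.mono_f
    have he := hS.epi_g
    obtain ⟨g, hg⟩ := h3 (h ≫ S.g)
    dsimp only at hg
    have hk : (h - σ ≫ Projective.factorThru g S.g) ≫ S.g = 0 := by
      rw [Preadditive.sub_comp, Category.assoc, Projective.factorThru_comp, hg, sub_self]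
    obtain ⟨k, hk'⟩ := h1 (hS.exact.lift _ hk)
    dsimp only at hk'
    refine ⟨k ≫ S.f + Projective.factorThru g S.g, ?_⟩
    dsimp only
    rw [Preadditive.comp_add, ← Category.assoc, hk', hS.exact.lift_f, sub_add_cancel]
  · intro I f c hc hf h
    choose g hg using fun j => hf j (h ≫ c.proj j)
    refine ⟨Fan.IsLimit.lift hc g, ?_⟩
    refine Fan.IsLimit.hom_ext hc _ _ fun j => ?_
    dsimp only at hg ⊢
    rw [Category.assoc, Fan.IsLimit.fac, hg]
end

section
/- Let (B, A, i, e, l) be a cleft extension of abelian categories and let X be an object of B such that the j-th left derived functor of l vanishes on X, i.e. (L_j l)(X) ≅ 0, for all j ≥ 1. Then for all j ≥ 1 and every object Y of A there is an isomorphism Ext^j_A(l(X), Y) ≅ Ext^j_B(X, e(Y)). -/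
open CategoryTheory Limits

universe v u₁ u₂ u

/-- Every abelian category has Ext groups in universe `max u v` (via the standard construction
of its derived category). -/
instance hasExtStandard (C : Type u) [Category.{v} C] [Abelian C] : HasExt.{max u v} C := by
  letI := HasDerivedCategory.standard C
  exact hasExt_of_hasDerivedCategory C

/-- Two surjections with the same kernel have isomorphic targets. -/
lemma nonempty_addEquiv_of_ker {Z E F : Type*} [AddCommGroup Z] [AddCommGroup E] [AddCommGroup F]
    (f : Z →+ E) (g : Z →+ F) (hf : Function.Surjective f) (hg : Function.Surjective g)
    (h : ∀ z, f z = 0 ↔ g z = 0) : Nonempty (E ≃+ F) := by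
  have hk : f.ker = g.ker := by
    ext z
    exact h z
  exact ⟨(QuotientAddGroup.quotientKerEquivOfSurjective f hf).symm.trans
    ((QuotientAddGroup.quotientAddEquivOfEq hk).trans
      (QuotientAddGroup.quotientKerEquivOfSurjective g hg))⟩

/-- The image of a projective resolution under `l`. -/
lemma exists_mapResolution {A : Type u₁} {B : Type u₂} [Category.{v} A] [Category.{v} B]
    [Abelian A] [Abelian B] [EnoughProjectives B]
    (e : A ⥤ B) (l : B ⥤ A) [PreservesFiniteColimits e] [l.Additive]
    (adj : l ⊣ e) (X : B) (hX : ∀ j : ℕ, 1 ≤ j → IsZero ((l.leftDerived j).obj X))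
    (P : ProjectiveResolution X) :
    ∃ Q : ProjectiveResolution (l.obj X),
      Q.complex = (l.mapHomologicalComplex _).obj P.complex := by
  have := Adjunction.leftAdjoint_preservesColimits.{0, 0} adj
  have w : ((l.mapHomologicalComplex _).obj P.complex).d 1 0 ≫ l.map (P.π.f 0) = 0 := by
    have := congrArg l.map P.complex_d_comp_π_f_zero
    rw [Functor.map_comp, Functor.map_zero] at this
    exact this
  let p : (l.mapHomologicalComplex _).obj P.complex ⟶ (ChainComplex.single₀ A).obj (l.obj X) :=
    ((ChainComplex.toSingle₀Equiv _ _).symm ⟨l.map (P.π.f 0), w⟩)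
  have hp0 : p.f 0 = l.map (P.π.f 0) := by
    exact ChainComplex.toSingle₀Equiv_symm_apply_f_zero (C := (l.mapHomologicalComplex _).obj P.complex) (X := l.obj X) (l.map (P.π.f 0)) w
  have hp : QuasiIso p := by
    constructor
    intro n
    cases n with
    | zero =>
      rw [ChainComplex.quasiIsoAt₀_iff, ShortComplex.quasiIso_iff_of_zeros' _
        (HomologicalComplex.shape ((l.mapHomologicalComplex _).obj P.complex) 0 0 (by simp)) rfl rfl]
      have : (ShortComplex.mk _ _ w).Exact ∧ Epi (ShortComplex.mk _ _ w).g := by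
        rw [ShortComplex.exact_and_epi_g_iff_g_is_cokernel]
        exact ⟨CokernelCofork.mapIsColimit _ (P.isColimitCokernelCofork) l⟩
      refine (ShortComplex.exact_and_epi_g_iff_of_iso ?_).2 this
      exact ShortComplex.isoMk (Iso.refl _) (Iso.refl _) (Iso.refl _)
          ((Category.id_comp _).trans (Category.comp_id _).symm)
          ((Category.id_comp _).trans (Eq.trans hp0.symm (Category.comp_id _).symm))
    | succ n =>
      rw [quasiIsoAt_iff_exactAt' (hL := ChainComplex.exactAt_succ_single_obj ..),
        HomologicalComplex.exactAt_iff_isZero_homology]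
      exact (hX (n + 1) (by omega)).of_iso (P.isoLeftDerivedObj l (n + 1)).symm
  exact ⟨{ complex := (l.mapHomologicalComplex _).obj P.complex
           projective := fun n => adj.map_projective _ (P.projective n)
           π := p
           quasiIso := hp }, rfl⟩

/-- Let `(B, A, i, e, l)` be a cleft extension of abelian categories and `X` an
object of `B` such that `(L_j l)(X) ≅ 0` for all `j ≥ 1`. Then for all `j ≥ 1` and every object
`Y` of `A` there is an isomorphism `Ext^j_A(l(X), Y) ≅ Ext^j_B(X, e(Y))`. -/
theorem stmt9 {A : Type u₁} {B : Type u₂} [Category.{v} A] [Category.{v} B]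
    [Abelian A] [Abelian B] [EnoughProjectives A] [EnoughProjectives B]
    (i : B ⥤ A) (e : A ⥤ B) (l : B ⥤ A) [e.Faithful]
    [PreservesFiniteLimits e] [PreservesFiniteColimits e] [l.Additive]
    (adj : l ⊣ e) (η : i ⋙ e ≅ 𝟭 B)
    (X : B) (hX : ∀ j : ℕ, 1 ≤ j → IsZero ((l.leftDerived j).obj X)) :
    ∀ (j : ℕ), 1 ≤ j → ∀ (Y : A),
      Nonempty (Abelian.Ext (l.obj X) Y j ≃+ Abelian.Ext X (e.obj Y) j) := by
  intro j hj Y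
  let P := projectiveResolution X
  obtain ⟨⟨K, hK, π, hπ⟩, rfl : K = _⟩ := exists_mapResolution e l adj X hX P
  set Q : ProjectiveResolution (l.obj X) := ⟨_, hK, π, hπ⟩ with hQ
  obtain ⟨n, rfl⟩ : ∃ n, j = n + 1 := ⟨j - 1, by omega⟩
  have := adj.right_adjoint_additive
  have hcomm : ∀ (a b : ℕ) (f : l.obj (P.complex.X b) ⟶ Y),
      P.complex.d a b ≫ adj.homEquiv _ _ f = adj.homEquiv _ _ (l.map (P.complex.d a b) ≫ f) :=
    fun a b f => (adj.homEquiv_naturality_left _ _).symm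
  have hzero : ∀ (Z : B), adj.homEquiv Z Y 0 = 0 := fun Z => by
    simp [Adjunction.homEquiv_unit]
  let f : (Preadditive.leftComp Y (l.map (P.complex.d (n + 1 + 1) (n + 1)))).ker →+
      Abelian.Ext (l.obj X) Y (n + 1) :=
    { toFun := fun f => Q.extMk f.1 (n + 1 + 1) rfl f.2
      map_zero' := Q.extMk_zero _ _
      map_add' := fun f g => (Q.add_extMk f.1 g.1 (n + 1 + 1) rfl f.2 g.2).symm }
  let g : (Preadditive.leftComp Y (l.map (P.complex.d (n + 1 + 1) (n + 1)))).ker →+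
      Abelian.Ext X (e.obj Y) (n + 1) :=
    { toFun := fun f => P.extMk (adj.homEquiv _ _ f.1) (n + 1 + 1) rfl (by
        have h : l.map (P.complex.d (n + 1 + 1) (n + 1)) ≫ f.1 = 0 := f.2
        rw [hcomm, h, hzero])
      map_zero' := by
        have : ∀ (h : _), P.extMk (adj.homEquiv (P.complex.X (n + 1)) Y 0) (n + 1 + 1) rfl h = 0 := by
          rw [hzero]; simp
        exact this _
      map_add' := fun a b => by
        rw [P.add_extMk]
        congr 1
        simp only [Adjunction.homEquiv_unit, AddSubgroup.coe_add, Functor.map_add,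
          Preadditive.comp_add] }
  refine nonempty_addEquiv_of_ker f g ?_ ?_ ?_
  · intro α
    obtain ⟨f, hf, rfl⟩ := Q.extMk_surjective α (n + 1 + 1) rfl
    exact ⟨⟨f, hf⟩, rfl⟩
  · intro α
    obtain ⟨f, hf, rfl⟩ := P.extMk_surjective α (n + 1 + 1) rfl
    obtain ⟨f, rfl⟩ := (adj.homEquiv _ _).surjective f
    rw [hcomm, ← hzero] at hf
    exact ⟨⟨f, (adj.homEquiv _ _).injective hf⟩, rfl⟩
  · rintro ⟨f, hf⟩
    refine (Q.extMk_eq_zero_iff f (n + 1 + 1) rfl hf n rfl).trans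
      (Iff.trans ?_ (P.extMk_eq_zero_iff (adj.homEquiv _ _ f) (n + 1 + 1) rfl (by
        have h : l.map (P.complex.d (n + 1 + 1) (n + 1)) ≫ f = 0 := hf
        rw [hcomm, h, hzero]) n rfl).symm)
    constructor
    · rintro ⟨k, hk⟩
      exact ⟨adj.homEquiv _ _ k, (hcomm _ _ _).trans (congrArg _ hk)⟩
    · rintro ⟨k, hk⟩
      obtain ⟨k, rfl⟩ := (adj.homEquiv _ _).surjective k
      rw [hcomm] at hk
      exact ⟨k, (adj.homEquiv _ _).injective hk⟩
end

section
/- Let (B, A, i, e, l) be a cleft extension of abelian categories and let X be an object of B such that (L_t l)(X) ≅ 0 for all 1 ≤ t ≤ n+1 (L_t l the t-th left derived functor of l). Set F(X) := e(ker(μ_{i(X)})), where μ is the counit of (l, e). Then l(X) is a partial n-tilting object of A if and only if X is a partial n-tilting object of B and Ext^j_B(X, F(X)) = 0 for all 1 ≤ j ≤ n. -/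
open CategoryTheory Limits

universe v u₁ u₂ u

/-- An object `X` of an abelian category has projective dimension at most `n` if there is an
exact sequence `0 ⟶ Pₙ ⟶ ⋯ ⟶ P₀ ⟶ X ⟶ 0` with each `Pₖ` projective. -/
def HasProjDimLE {C : Type u} [Category.{v} C] [Abelian C] (X : C) (n : ℕ) : Prop :=
  ∃ (S : ComposableArrows C (n + 1)),
    S.Exact ∧ Mono (S.map' 0 1) ∧ Epi (S.map' n (n + 1)) ∧
    (∀ (k : ℕ) (hk : k ≤ n), Projective (S.obj' k (by omega))) ∧
    Nonempty (S.obj' (n + 1) ≅ X)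

/-- An object `X` of an abelian category is partial `n`-tilting if it has projective dimension
at most `n` and `Ext^j(X, X) = 0` for all `j ≥ 1`. -/
def IsPartialNTilting {C : Type u} [Category.{v} C] [Abelian C] (X : C) (n : ℕ) : Prop :=
  HasProjDimLE X n ∧ ∀ j : ℕ, 1 ≤ j → Subsingleton (Abelian.Ext X X j)

open Abelian in
lemma aux_ext_shift {C : Type u} [Category.{v} C] [Abelian C] [HasExt.{u₁} C]
    {S : ShortComplex C} (hS : S.ShortExact) [Projective S.X₂] (Y : C) (j : ℕ) (hj : 1 ≤ j) :
    Subsingleton (Ext S.X₃ Y (j + 1)) ↔ Subsingleton (Ext S.X₁ Y j) := by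
  constructor
  · intro h
    refine subsingleton_of_forall_eq 0 fun x => ?_
    obtain ⟨y, rfl⟩ := Ext.contravariant_sequence_exact₁ hS Y x (add_comm 1 j)
      (Subsingleton.elim _ _)
    rw [y.eq_zero_of_hasProjectiveDimensionLT 1 hj, Ext.comp_zero]
  · intro h
    refine subsingleton_of_forall_eq 0 fun x => ?_
    obtain ⟨y, rfl⟩ := Ext.contravariant_sequence_exact₃ hS Y x
      (Ext.eq_zero_of_hasProjectiveDimensionLT _ 1 (by omega)) (add_comm 1 j)
    rw [Subsingleton.elim y 0, Ext.comp_zero]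

open Abelian in
lemma aux_ext_one {C : Type u} [Category.{v} C] [Abelian C] [HasExt.{u₁} C]
    {S : ShortComplex C} (hS : S.ShortExact) [Projective S.X₂] (Y : C) :
    Subsingleton (Ext S.X₃ Y 1) ↔ ∀ f : S.X₁ ⟶ Y, ∃ g : S.X₂ ⟶ Y, S.f ≫ g = f := by
  constructor
  · intro h f
    obtain ⟨y, hy⟩ := Ext.contravariant_sequence_exact₁ hS Y (Ext.mk₀ f) (add_zero 1)
      (Subsingleton.elim _ _)
    obtain ⟨g, rfl⟩ := (Ext.mk₀_bijective _ _).2 y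
    rw [Ext.mk₀_comp_mk₀] at hy
    exact ⟨g, (Ext.mk₀_bijective _ _).1 hy⟩
  · intro h
    refine subsingleton_of_forall_eq 0 fun x => ?_
    obtain ⟨y, rfl⟩ := Ext.contravariant_sequence_exact₃ hS Y x
      (Ext.eq_zero_of_hasProjectiveDimensionLT _ 1 (by omega)) (add_zero 1)
    obtain ⟨f, rfl⟩ := (Ext.mk₀_bijective _ _).2 y
    obtain ⟨g, rfl⟩ := h f
    rw [← Ext.mk₀_comp_mk₀, hS.extClass_comp_assoc]

lemma aux_mono {C : Type u} [Category.{v} C] [Abelian C] {P₂ P₁ P₀ Z : C}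
    (d₂ : P₂ ⟶ P₁) (d₁ : P₁ ⟶ P₀) (p : P₁ ⟶ Z) [Epi p] (k : Z ⟶ P₀) (hk : p ≫ k = d₁)
    (hp : d₂ ≫ p = 0) (w : d₂ ≫ d₁ = 0) (h : (ShortComplex.mk d₂ d₁ w).Exact) : Mono k := by
  refine Preadditive.mono_of_cancel_zero _ fun {T} a ha => ?_
  obtain ⟨T', π, _, y, hy⟩ := surjective_up_to_refinements_of_epi p a
  obtain ⟨T'', π', _, x, hx⟩ := h.exact_up_to_refinements y (by
    have : y ≫ p ≫ k = 0 := by rw [← Category.assoc, ← hy, Category.assoc, ha, comp_zero]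
    rwa [hk] at this)
  dsimp at hx
  rw [← cancel_epi π, ← cancel_epi π', hy, ← Category.assoc, hx, Category.assoc, hp]
  simp

/-- `l` keeps the first `j` steps of a projective resolution exact. -/
inductive AuxGood {A : Type u₁} {B : Type u₂} [Category.{v} A] [Category.{v} B]
    [Abelian A] [Abelian B] (l : B ⥤ A) [l.Additive] : ℕ → B → Prop
  | zero (X : B) : AuxGood l 0 X
  | succ (j : ℕ) (S : ShortComplex B) (hS : S.ShortExact) (hP : Projective S.X₂)
      (hl : (S.map l).ShortExact) (hK : AuxGood l j S.X₁) : AuxGood l (j + 1) S.X₃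

lemma aux_lift {A : Type u₁} {B : Type u₂} [Category.{v} A] [Category.{v} B]
    {e : A ⥤ B} {l : B ⥤ A} (adj : l ⊣ e) {K P : B} (k : K ⟶ P) (Y : A) :
    (∀ f : l.obj K ⟶ Y, ∃ g : l.obj P ⟶ Y, l.map k ≫ g = f) ↔
      ∀ f : K ⟶ e.obj Y, ∃ g : P ⟶ e.obj Y, k ≫ g = f := by
  constructor
  · intro H f
    obtain ⟨g, hg⟩ := H ((adj.homEquiv _ _).symm f)
    refine ⟨adj.homEquiv _ _ g, ?_⟩
    rw [← adj.homEquiv_naturality_left, hg]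
    simp
  · intro H f
    obtain ⟨g, hg⟩ := H (adj.homEquiv _ _ f)
    refine ⟨(adj.homEquiv _ _).symm g, ?_⟩
    rw [← adj.homEquiv_naturality_left_symm, hg]
    simp

lemma AuxGood.ext_iff {A : Type u₁} {B : Type u₂} [Category.{v} A] [Category.{v} B]
    [Abelian A] [Abelian B] {e : A ⥤ B} {l : B ⥤ A} [PreservesFiniteColimits e] [l.Additive]
    (adj : l ⊣ e) {j : ℕ} {X : B} (h : AuxGood l j X) (Y : A) :
    ∀ t, 1 ≤ t → t ≤ j →
      (Subsingleton (Abelian.Ext (l.obj X) Y t) ↔ Subsingleton (Abelian.Ext X (e.obj Y) t)) := by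
  induction h with
  | zero X => intro t h1 h2; omega
  | succ j S hS hP hl hK ih =>
    intro t h1 h2
    have : Projective (S.map l).X₂ := adj.map_projective _ hP
    obtain _ | _ | t := t
    · omega
    · refine (aux_ext_one hl Y).trans (Iff.trans ?_ (aux_ext_one hS (e.obj Y)).symm)
      exact aux_lift adj S.f Y
    · exact (aux_ext_shift hl Y (t + 1) (by omega)).trans
        ((ih (t + 1) (by omega) (by omega)).trans
          (aux_ext_shift hS (e.obj Y) (t + 1) (by omega)).symm)

lemma auxGood_of_complex {A : Type u₁} {B : Type u₂} [Category.{v} A] [Category.{v} B]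
    [Abelian A] [Abelian B] {l : B ⥤ A} [PreservesFiniteColimits l] [l.Additive]
    (P : ChainComplex B ℕ) (hP : ∀ m, Projective (P.X m)) (hex : ∀ m, P.ExactAt (m + 1)) (j : ℕ) :
    ∀ (m : ℕ) (Z : B) (g : P.X m ⟶ Z) (_ : Epi g) (w : P.d (m + 1) m ≫ g = 0)
      (_ : (ShortComplex.mk _ _ w).Exact)
      (_ : ∀ t, m ≤ t → t < m + j →
        ((l.mapHomologicalComplex _).obj P).ExactAt (t + 1)), AuxGood l j Z := by
  induction j with
  | zero => intro m Z g _ w h hl; exact .zero Z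
  | succ j ih =>
    intro m Z g _ w h hl
    have h1 : (ShortComplex.mk (P.d (m + 2) (m + 1)) (P.d (m + 1) m) (by simp)).Exact :=
      (P.exactAt_iff' (m + 2) (m + 1) m (by simp) (by simp)).1 (hex m)
    have h2 : (ShortComplex.mk (l.map (P.d (m + 2) (m + 1))) (l.map (P.d (m + 1) m))
        (by rw [← l.map_comp]; simp)).Exact :=
      (((l.mapHomologicalComplex _).obj P).exactAt_iff' (m + 2) (m + 1) m
        (by simp) (by simp)).1 (hl m le_rfl (by omega))
    let p := cokernel.π (P.d (m + 2) (m + 1))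
    let k : cokernel (P.d (m + 2) (m + 1)) ⟶ P.X m := cokernel.desc _ (P.d (m + 1) m) (by simp)
    have hpk : p ≫ k = P.d (m + 1) m := by simp [p, k]
    have hkg : k ≫ g = 0 := by
      rw [← cancel_epi p, ← Category.assoc, hpk, w, comp_zero]
    let S := ShortComplex.mk k g hkg
    have hk : Mono k := aux_mono _ _ p k hpk (by simp [p]) _ h1
    have hlk : Mono (l.map k) := aux_mono _ _ (l.map p) (l.map k) (by rw [← l.map_comp, hpk])
      (by rw [← l.map_comp]; simp [p]) _ h2
    have hSe : S.Exact := by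
      rw [ShortComplex.exact_iff_exact_up_to_refinements]
      intro T x hx
      obtain ⟨T', π, hπ, y, hy⟩ := h.exact_up_to_refinements x hx
      exact ⟨T', π, hπ, y ≫ p, by rw [hy, Category.assoc]; change _ = _ ≫ p ≫ k; rw [hpk]⟩
    have hS : S.ShortExact := { exact := hSe, mono_f := hk, epi_g := ‹_› }
    refine .succ j S hS (hP m) ?_ ?_
    · have : Epi (l.map g) := inferInstance
      exact { exact := hSe.map_of_epi_of_preservesCokernel l ‹_› inferInstance
              mono_f := hlk, epi_g := this }
    · refine ih (m + 1) _ p inferInstance (by simp [p]) ?_ fun t h1 h2 => hl t (by omega) (by omega)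
      exact ShortComplex.exact_cokernel _

lemma auxGood_of_leftDerived {A : Type u₁} {B : Type u₂} [Category.{v} A] [Category.{v} B]
    [Abelian A] [Abelian B] [EnoughProjectives B] {l : B ⥤ A} [PreservesFiniteColimits l]
    [l.Additive] (X : B) (n : ℕ)
    (hX : ∀ t : ℕ, 1 ≤ t → t ≤ n → IsZero ((l.leftDerived t).obj X)) : AuxGood l n X := by
  let P := ProjectiveResolution.of X
  have hepi : Epi (P.π.f 0) := inferInstance
  refine auxGood_of_complex P.complex P.projective (fun m => P.complex_exactAt_succ m) n 0 _
    (P.π.f 0) hepi _ P.exact₀ ?_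
  intro t _ ht
  rw [HomologicalComplex.exactAt_iff_isZero_homology]
  exact (hX (t + 1) (by omega) (by omega)).of_iso (P.isoLeftDerivedObj l (t + 1)).symm

lemma aux_pd_of_ext {C : Type u} [Category.{v} C] [Abelian C] [EnoughProjectives C]
    [HasExt.{u₁} C] (n : ℕ) : ∀ (X : C), (∀ Y : C, Subsingleton (Abelian.Ext X Y (n + 1))) →
      HasProjectiveDimensionLT X (n + 1) := by
  induction n with
  | zero =>
    intro X h
    have := projective_iff_subsingleton_ext_one.2 (fun Y => h Y)
    infer_instance
  | succ n ih =>
    intro X h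
    have hS : (ShortComplex.mk (kernel.ι (Projective.π X)) (Projective.π X) (by simp)).ShortExact :=
      { exact := ShortComplex.exact_kernel _ }
    exact (hS.hasProjectiveDimensionLT_X₃_iff n (inferInstanceAs (Projective (Projective.over X)))).2
      (ih _ fun Y => by
        have : Projective (ShortComplex.mk (kernel.ι (Projective.π X)) (Projective.π X)
          (by simp)).X₂ := inferInstanceAs (Projective (Projective.over X))
        exact (aux_ext_shift hS Y (n + 1) (by omega)).1 (h Y))

lemma aux_ext_retract {C : Type u} [Category.{v} C] [Abelian C]
    [HasExt.{u₁} C] (X : C) {Y W : C} (i : Y ⟶ W) (r : W ⟶ Y) (h : i ≫ r = 𝟙 Y) (j : ℕ)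
    [Subsingleton (Abelian.Ext X W j)] : Subsingleton (Abelian.Ext X Y j) := by
  refine subsingleton_of_forall_eq 0 fun x => ?_
  have : (x.comp (Abelian.Ext.mk₀ i) (add_zero j)).comp (Abelian.Ext.mk₀ r) (add_zero j) = x := by
    rw [Abelian.Ext.comp_assoc_of_third_deg_zero, Abelian.Ext.mk₀_comp_mk₀, h,
      Abelian.Ext.comp_mk₀_id]
  rw [← this, Subsingleton.elim (x.comp _ _) 0, Abelian.Ext.zero_comp]

lemma aux_pd_of_hasProjDimLE {C : Type u} [Category.{v} C] [Abelian C] {X : C} {n : ℕ}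
    (h : HasProjDimLE X n) : HasProjectiveDimensionLT X (n + 1) := by
  obtain ⟨S, hS, hm, he, hP, ⟨iso⟩⟩ := h
  have key : ∀ (k : ℕ) (hk : k ≤ n) (Z : C) (p : S.obj' k (by omega) ⟶ Z)
      (q : Z ⟶ S.obj' (k + 1) (by omega)) (_ : Epi p) (_ : Mono q)
      (_ : p ≫ q = S.map' k (k + 1)), HasProjectiveDimensionLT Z (k + 1) := by
    intro k
    induction k with
    | zero =>
      intro hk Z p q _ _ hpq
      have : Mono p := by
        have : Mono (p ≫ q) := by rw [hpq]; exact hm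
        exact mono_of_mono p q
      have : IsIso p := isIso_of_mono_of_epi p
      have : Projective (S.obj' 0 (by omega)) := hP 0 hk
      exact hasProjectiveDimensionLT_of_iso (asIso p) 1
    | succ k ih =>
      intro hk Z p q _ _ hpq
      have hk' : k ≤ n := by omega
      let d := S.map' k (k + 1)
      have h1 := ih hk' (Abelian.image d) (Abelian.factorThruImage d) (Abelian.image.ι d)
        inferInstance inferInstance (Abelian.image.fac d)
      have hex := hS.exact k (by omega)
      have hz : d ≫ S.map' (k + 1) (k + 2) = 0 := hS.toIsComplex.zero k (by omega)
      have w : Abelian.image.ι d ≫ p = 0 := by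
        rw [← cancel_mono q, ← cancel_epi (Abelian.factorThruImage d)]
        rw [Category.assoc, hpq, ← Category.assoc, Abelian.image.fac d, hz]
        simp
      have hSe : (ShortComplex.mk (Abelian.image.ι d) p w).Exact := by
        rw [ShortComplex.exact_iff_exact_up_to_refinements]
        intro T x hx
        obtain ⟨T', π, hπ, y, hy⟩ := hex.exact_up_to_refinements x (by
          have : x ≫ p ≫ q = 0 := by rw [← Category.assoc, hx, zero_comp]
          rwa [hpq] at this)
        refine ⟨T', π, hπ, y ≫ Abelian.factorThruImage d, ?_⟩
        rw [hy, Category.assoc]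
        change _ = y ≫ Abelian.factorThruImage d ≫ Abelian.image.ι d
        rw [Abelian.image.fac d]
      have hSS : (ShortComplex.mk (Abelian.image.ι d) p w).ShortExact := { exact := hSe }
      exact (hSS.hasProjectiveDimensionLT_X₃_iff k (hP (k + 1) hk)).2 h1
  have := key n le_rfl _ (S.map' n (n + 1)) (𝟙 _) he inferInstance (Category.comp_id _)
  exact hasProjectiveDimensionLT_of_iso iso (n + 1)

lemma aux_hasProjDimLE_step {C : Type u} [Category.{v} C] [Abelian C] [EnoughProjectives C]
    (X : C) (m : ℕ) :
    ∃ (S : ComposableArrows C (m + 1)),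
      S.Exact ∧ Mono (S.map' 0 1) ∧ Epi (S.map' m (m + 1)) ∧
      (∀ (k : ℕ) (hk : k ≤ m), 1 ≤ k → Projective (S.obj' k (by omega))) ∧
      Nonempty (S.obj' (m + 1) ≅ X) ∧
      ∀ N, HasProjectiveDimensionLT X (m + N + 1) →
        HasProjectiveDimensionLT (S.obj' 0 (by omega)) (N + 1) := by
  induction m with
  | zero =>
    refine ⟨ComposableArrows.mk₁ (𝟙 X), ComposableArrows.exact₁ _, ?_, ?_, ?_, ⟨Iso.refl _⟩, ?_⟩
    · exact inferInstanceAs (Mono (𝟙 X))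
    · exact inferInstanceAs (Epi (𝟙 X))
    · intro k hk h; omega
    · intro N h; rw [Nat.zero_add] at h; exact h
  | succ m ih =>
    obtain ⟨S, hS, hm, he, hP, hiso, hN⟩ := ih
    obtain ⟨F, K, f, rfl⟩ := S.precomp_surjective
    have hf : Mono f := hm
    let p := Projective.π K
    have hSS : (ShortComplex.mk (kernel.ι p) p (by simp)).ShortExact :=
      { exact := ShortComplex.exact_kernel _ }
    have hk0 : kernel.ι p ≫ p ≫ f = 0 := by simp
    have hex0 : (ShortComplex.mk (kernel.ι p) (p ≫ f) hk0).Exact := by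
      rw [ShortComplex.exact_iff_exact_up_to_refinements]
      intro T x hx
      have hx' : x ≫ p = 0 := by
        rw [← cancel_mono f, Category.assoc, zero_comp]; exact hx
      exact ⟨T, 𝟙 _, inferInstance, kernel.lift p x hx', by simp⟩
    have hex1 : (F.precomp (p ≫ f)).Exact := by
      obtain _ | m := m
      · exact ComposableArrows.exact₁ _
      · refine ComposableArrows.exact_of_δ₀ ?_ (hS.δ₀ : F.Exact)
        have hz : f ≫ F.map' 0 1 = 0 := hS.toIsComplex.zero 0 (by omega)
        have h0 : (ShortComplex.mk f (F.map' 0 1) hz).Exact := hS.exact 0 (by omega)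
        refine ShortComplex.Exact.exact_toComposableArrows
          (S := ShortComplex.mk (p ≫ f) (F.map' 0 1) (by rw [Category.assoc, hz, comp_zero])) ?_
        rw [ShortComplex.exact_iff_exact_up_to_refinements]
        intro T x hx
        obtain ⟨T', π, hπ, y, hy⟩ := h0.exact_up_to_refinements x hx
        obtain ⟨T'', π', hπ', z, hz'⟩ := surjective_up_to_refinements_of_epi p y
        refine ⟨T'', π' ≫ π, epi_comp _ _, z, ?_⟩
        dsimp at hy ⊢
        rw [Category.assoc, hy, ← Category.assoc, hz', Category.assoc]
    refine ⟨(F.precomp (p ≫ f)).precomp (kernel.ι p), ?_, ?_, ?_, ?_, ?_, ?_⟩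
    · exact ComposableArrows.exact_of_δ₀ hex0.exact_toComposableArrows hex1
    · exact inferInstanceAs (Mono (kernel.ι p))
    · obtain _ | m := m
      · have he' : Epi f := he
        exact (epi_comp p f : Epi (p ≫ f))
      · exact he
    · rintro (_ | _ | k) hk h
      · omega
      · exact inferInstanceAs (Projective (Projective.over K))
      · exact hP (k + 1) (by omega) (by omega)
    · exact hiso
    · intro N h
      have := hN (N + 1) (by convert h using 1; omega)
      exact (hSS.hasProjectiveDimensionLT_X₃_iff N
        (inferInstanceAs (Projective (Projective.over K)))).1 this

lemma aux_hasProjDimLE_iff {C : Type u} [Category.{v} C] [Abelian C] [EnoughProjectives C]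
    (X : C) (n : ℕ) : HasProjDimLE X n ↔ HasProjectiveDimensionLT X (n + 1) := by
  refine ⟨aux_pd_of_hasProjDimLE, fun h => ?_⟩
  obtain ⟨S, hS, hm, he, hP, hiso, hN⟩ := aux_hasProjDimLE_step X n
  refine ⟨S, hS, hm, he, fun k hk => ?_, hiso⟩
  obtain _ | k := k
  · have := hN 0 h
    exact projective_iff_hasProjectiveDimensionLT_one.2 this
  · exact hP _ hk (by omega)

/-- Let `(B, A, i, e, l)` be a cleft extension of abelian categories and `X` an
object of `B` such that `(L_t l)(X) ≅ 0` for all `1 ≤ t ≤ n + 1`. Setting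
`F(X) := e(ker(μ_{i(X)}))` where `μ` is the counit of `(l, e)`, the object `l(X)` is partial
`n`-tilting in `A` if and only if `X` is partial `n`-tilting in `B` and
`Ext^j_B(X, F(X)) = 0` for all `1 ≤ j ≤ n`. -/
theorem stmt10 {A : Type u₁} {B : Type u₂} [Category.{v} A] [Category.{v} B]
    [Abelian A] [Abelian B] [EnoughProjectives A] [EnoughProjectives B]
    (i : B ⥤ A) (e : A ⥤ B) (l : B ⥤ A) [e.Faithful]
    [PreservesFiniteLimits e] [PreservesFiniteColimits e] [l.Additive]
    (adj : l ⊣ e) (η : i ⋙ e ≅ 𝟭 B)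
    (X : B) (n : ℕ)
    (hX : ∀ t : ℕ, 1 ≤ t → t ≤ n + 1 → IsZero ((l.leftDerived t).obj X)) :
    IsPartialNTilting (l.obj X) n ↔
      IsPartialNTilting X n ∧
        ∀ j : ℕ, 1 ≤ j → j ≤ n →
          Subsingleton (Abelian.Ext X (e.obj (kernel (adj.counit.app (i.obj X)))) j) := by
  have : PreservesColimitsOfSize.{0, 0} l := adj.leftAdjoint_preservesColimits
  have : PreservesFiniteColimits l := inferInstance
  have hgood := auxGood_of_leftDerived X (n + 1) hX
  have hext := fun Y t h1 h2 => hgood.ext_iff adj Y t h1 h2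
  have hadd : e.Additive := Functor.additive_of_preserves_binary_products e
  set μ := adj.counit.app (i.obj X) with hμ
  let s : e.obj (i.obj X) ⟶ e.obj (l.obj (e.obj (i.obj X))) := adj.unit.app (e.obj (i.obj X))
  have hs : s ≫ e.map μ = 𝟙 _ := adj.right_triangle_components (i.obj X)
  have hepi : Epi (e.map μ) := by
    have : Epi (s ≫ e.map μ) := by rw [hs]; infer_instance
    exact epi_of_epi s _
  let T := ShortComplex.mk (e.map (kernel.ι μ)) (e.map μ) (by rw [← e.map_comp]; simp)
  have hTe : T.Exact := (ShortComplex.exact_kernel μ).map e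
  have hTm : Mono T.f := inferInstanceAs (Mono (e.map (kernel.ι μ)))
  have hT : T.ShortExact := { exact := hTe, mono_f := hTm, epi_g := hepi }
  let sp : T.Splitting := ShortComplex.Splitting.ofExactOfSection T hTe s hs hTm
  let φ : e.obj (i.obj X) ≅ X := η.app X
  let ψ : e.obj (l.obj (e.obj (i.obj X))) ≅ e.obj (l.obj X) := e.mapIso (l.mapIso φ)
  have hiff : ∀ j, Subsingleton (Abelian.Ext X (e.obj (l.obj X)) j) ↔
      Subsingleton (Abelian.Ext X X j) ∧ Subsingleton (Abelian.Ext X (e.obj (kernel μ)) j) := by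
    intro j
    constructor
    · intro h
      have h2 : Subsingleton (Abelian.Ext X (e.obj (l.obj (e.obj (i.obj X)))) j) :=
        aux_ext_retract X ψ.hom ψ.inv ψ.hom_inv_id j
      have h3 : Subsingleton (Abelian.Ext X (e.obj (i.obj X)) j) :=
        aux_ext_retract X (W := e.obj (l.obj (e.obj (i.obj X)))) s (e.map μ) hs j
      exact ⟨aux_ext_retract X φ.inv φ.hom φ.inv_hom_id j,
        aux_ext_retract X (W := e.obj (l.obj (e.obj (i.obj X)))) (e.map (kernel.ι μ)) sp.r sp.f_r j⟩
    · rintro ⟨h1, h2⟩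
      have h3 : Subsingleton (Abelian.Ext X (e.obj (i.obj X)) j) :=
        aux_ext_retract X φ.hom φ.inv φ.hom_inv_id j
      have h4 : Subsingleton (Abelian.Ext X (e.obj (l.obj (e.obj (i.obj X)))) j) := by
        refine subsingleton_of_forall_eq 0 fun x => ?_
        obtain ⟨y, rfl⟩ := Abelian.Ext.covariant_sequence_exact₂ X hT x (h3.elim _ _)
        rw [h2.elim y 0, Abelian.Ext.zero_comp]
      exact aux_ext_retract X ψ.inv ψ.hom ψ.inv_hom_id j
  unfold IsPartialNTilting
  rw [aux_hasProjDimLE_iff, aux_hasProjDimLE_iff]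
  constructor
  · rintro ⟨hpd, hE⟩
    have hpdX : HasProjectiveDimensionLT X (n + 1) := by
      refine aux_pd_of_ext n X fun Y => ?_
      have h1 : Subsingleton (Abelian.Ext (l.obj X) (i.obj Y) (n + 1)) :=
        HasProjectiveDimensionLT.subsingleton (l.obj X) (n + 1) (n + 1) le_rfl (i.obj Y)
      have h2 : Subsingleton (Abelian.Ext X ((i ⋙ e).obj Y) (n + 1)) := (hext (i.obj Y) (n + 1) (by omega) le_rfl).1 h1
      exact aux_ext_retract X (η.app Y).inv (η.app Y).hom (η.app Y).inv_hom_id (n + 1)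
    have hE' : ∀ j, 1 ≤ j → j ≤ n → _ := fun j h1 h2 =>
      (hiff j).1 ((hext (l.obj X) j h1 (by omega)).1 (hE j h1))
    refine ⟨⟨hpdX, fun j hj => ?_⟩, fun j h1 h2 => (hE' j h1 h2).2⟩
    by_cases h : j ≤ n
    · exact (hE' j hj h).1
    · exact HasProjectiveDimensionLT.subsingleton X (n + 1) j (by omega) X
  · rintro ⟨⟨hpd, hE⟩, hF⟩
    have hpdl : HasProjectiveDimensionLT (l.obj X) (n + 1) := by
      refine aux_pd_of_ext n _ fun Y => ?_
      exact (hext Y (n + 1) (by omega) le_rfl).2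
        (HasProjectiveDimensionLT.subsingleton X (n + 1) (n + 1) le_rfl _)
    refine ⟨hpdl, fun j hj => ?_⟩
    by_cases h : j ≤ n
    · exact (hext (l.obj X) j hj (by omega)).2 ((hiff j).2 ⟨hE j hj, hF j hj h⟩)
    · exact HasProjectiveDimensionLT.subsingleton (l.obj X) (n + 1) j (by omega) _
end

section
/- Let (B, A, i, e, l) be a cleft extension of abelian categories. Then every object A of A admits a projective resolution of the form ⋯ → l(P₁) → l(P₀) → A → 0, where each P_j is a projective object of B. -/
open CategoryTheory Limits

universe v u₁ u₂

theorem zero_aux {C : Type*} [Category C] [Abelian C] {W X Y Z : C} (f : X ⟶ Y)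
    (p : W ⟶ kernel f) (g : Y ⟶ Z) : (p ≫ kernel.ι f) ≫ (f ≫ g) = 0 := by
  simp

theorem exact_aux {C : Type*} [Category C] [Abelian C] {W X Y Z : C} (f : X ⟶ Y)
    (p : W ⟶ kernel f) (hp : Epi p) (g : Y ⟶ Z) [Mono g]
    (w : (p ≫ kernel.ι f) ≫ (f ≫ g) = 0) :
    (ShortComplex.mk (p ≫ kernel.ι f) (f ≫ g) w).Exact := by
  have h : (ShortComplex.mk (kernel.ι f) f (kernel.condition f)).Exact :=
    ShortComplex.exact_of_f_is_kernel _ (kernelIsKernel f)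
  have h2 : (ShortComplex.mk (p ≫ kernel.ι f) f (by simp)).Exact := by
    let α : ShortComplex.mk (p ≫ kernel.ι f) f (by simp) ⟶
        ShortComplex.mk (kernel.ι f) f (kernel.condition f) :=
      { τ₁ := p, τ₂ := 𝟙 _, τ₃ := 𝟙 _ }
    have : Epi α.τ₁ := hp
    have : IsIso α.τ₂ := inferInstanceAs (IsIso (𝟙 X))
    have : Mono α.τ₃ := inferInstanceAs (Mono (𝟙 Y))
    exact (ShortComplex.exact_iff_of_epi_of_isIso_of_mono α).2 h
  let β : ShortComplex.mk (p ≫ kernel.ι f) f (by simp) ⟶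
      ShortComplex.mk (p ≫ kernel.ι f) (f ≫ g) w :=
    { τ₁ := 𝟙 _, τ₂ := 𝟙 _, τ₃ := g }
  have : Epi β.τ₁ := inferInstanceAs (Epi (𝟙 W))
  have : IsIso β.τ₂ := inferInstanceAs (IsIso (𝟙 X))
  have : Mono β.τ₃ := ‹Mono g›
  exact (ShortComplex.exact_iff_of_epi_of_isIso_of_mono β).1 h2

/-- Iterated syzygies. -/
noncomputable def syz {A : Type u₁} [Category.{v} A] [Abelian A] (F : A → A)
    (p : ∀ X, F X ⟶ X) (Ao : A) : ℕ → A
  | 0 => Ao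
  | n + 1 => kernel (p (syz F p Ao n))

/-- Let `(B, A, i, e, l)` be a cleft extension of abelian categories. Then
every object `Ao` of `A` admits a projective resolution of the form
`⋯ ⟶ l(P₁) ⟶ l(P₀) ⟶ Ao ⟶ 0` with each `Pⱼ` a projective object of `B`. -/
theorem stmt13 {A : Type u₁} {B : Type u₂} [Category.{v} A] [Category.{v} B]
    [Abelian A] [Abelian B] [EnoughProjectives A] [EnoughProjectives B]
    (i : B ⥤ A) (e : A ⥤ B) (l : B ⥤ A) [e.Faithful]
    [PreservesFiniteLimits e] [PreservesFiniteColimits e]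
    (adj : l ⊣ e) (η : i ⋙ e ≅ 𝟭 B) (Ao : A) :
    ∃ (P : ℕ → B) (_ : ∀ n, Projective (P n))
      (d : ∀ n : ℕ, l.obj (P (n + 1)) ⟶ l.obj (P n)) (π : l.obj (P 0) ⟶ Ao),
      (∀ n, Projective (l.obj (P n))) ∧ Epi π ∧
      ∃ (w₀ : d 0 ≫ π = 0) (w : ∀ n, d (n + 1) ≫ d n = 0),
        (ShortComplex.mk (d 0) π w₀).Exact ∧
        ∀ n, (ShortComplex.mk (d (n + 1)) (d n) (w n)).Exact := by
  have step : ∀ X : A, ∃ (Q : B) (p : l.obj Q ⟶ X), Projective Q ∧ Epi p := by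
    intro X
    refine ⟨Projective.over (e.obj X), (adj.homEquiv _ _).symm (Projective.π (e.obj X)),
      inferInstance, ?_⟩
    rw [Adjunction.homEquiv_counit]
    have : ∀ Y, Epi (adj.counit.app Y) := fun Y => inferInstance
    have : l.PreservesEpimorphisms := Functor.preservesEpimorphisms_of_adjunction adj
    exact epi_comp _ _
  choose Q p hQ hp using step
  have : e.PreservesEpimorphisms := inferInstance
  have hl : ∀ X, Projective X → Projective (l.obj X) := fun X hX => adj.map_projective X hX
  let K : ℕ → A := syz (fun X => l.obj (Q X)) p Ao
  have hE : ∀ n, Epi (p (K n)) := fun n => hp _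
  let q : ∀ n, l.obj (Q (K (n + 1))) ⟶ kernel (p (K n)) := fun n => p (K (n + 1))
  have hq : ∀ n, Epi (q n) := fun n => hp _
  refine ⟨fun n => Q (K n), fun n => hQ _, fun n => q n ≫ kernel.ι (p (K n)), p Ao,
    fun n => hl _ (hQ _), hp _, ?_, ?_, ?_, ?_⟩
  · change (q 0 ≫ kernel.ι (p (K 0))) ≫ p (K 0) = 0
    simp
  · intro n
    exact zero_aux (q n) (q (n + 1)) (kernel.ι (p (K n)))
  · have := exact_aux (p (K 0)) (q 0) (hq 0) (𝟙 _) (by simp)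
    simp only [Category.comp_id] at this
    exact this
  · intro n
    exact exact_aux (q n) (q (n + 1)) (hq (n + 1)) (kernel.ι (p (K n)))
      (zero_aux (q n) (q (n + 1)) (kernel.ι (p (K n))))
end

section
/- Let (B, A, i, e, l) be a cleft extension of abelian categories in which A and B have enough injectives and arbitrary products, and suppose e has a right adjoint functor r. Let 0 → B → E⁰ →ξ E¹ be an injective copresentation of B in B. Then r(B) is a cosilting object of A with respect to r(ξ) if and only if B is a cosilting object of B with respect to ξ and F'(B) ∈ Cogen(B), where F'(B) := e(coker(ν_{i(B)})) and ν : Id_A → r ∘ e is the unit of the adjoint pair (e, r). -/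
open CategoryTheory Limits

universe v u₁ u₂

/-- For a morphism `ξ : X ⟶ Y` in a category `C`, `CClass ξ` is the class of objects `L`
such that `Hom_C(L, ξ) : Hom_C(L, X) → Hom_C(L, Y)` is surjective. -/
def CClass {C : Type u₁} [Category.{v} C] {X Y : C} (ξ : X ⟶ Y) (L : C) : Prop :=
  Function.Surjective (fun g : L ⟶ X => g ≫ ξ)

/-- `Cogen X` is the class of subobjects of products of copies of `X`. -/
def Cogen {C : Type u₁} [Category.{v} C] [HasProducts.{v} C] (X L : C) : Prop :=
  ∃ (I : Type v) (m : L ⟶ ∏ᶜ fun _ : I => X), Mono m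

/-- Given a morphism `ξ` occurring in an injective copresentation `0 ⟶ X ⟶ E⁰ ⟶ E¹`, the
object `X` is cosilting with respect to `ξ` if `Cogen X = C_ξ`. -/
def IsCosilting {C : Type u₁} [Category.{v} C] [HasProducts.{v} C]
    {E₀ E₁ : C} (ξ : E₀ ⟶ E₁) (X : C) : Prop :=
  ∀ L : C, Cogen X L ↔ CClass ξ L

theorem cogen_iff {C : Type u₁} [Category.{v} C] [Abelian C] [HasProducts.{v} C] (X L : C) :
    Cogen X L ↔ ∀ (Z : C) (f : Z ⟶ L), (∀ g : L ⟶ X, f ≫ g = 0) → f = 0 := by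
  constructor
  · rintro ⟨I, m, hm⟩ Z f h
    have : f ≫ m = 0 := by
      apply Limits.Pi.hom_ext
      intro j
      rw [Category.assoc, h, zero_comp]
    exact (cancel_mono m).1 (by rw [this, zero_comp])
  · intro h
    refine ⟨(L ⟶ X), Limits.Pi.lift (fun g => g), ?_⟩
    refine Preadditive.mono_of_cancel_zero _ ?_
    intro Z f hf
    refine h Z f fun g => ?_
    have := hf =≫ Limits.Pi.π (fun _ : (L ⟶ X) => X) g
    simpa using this

theorem cclass_iso {C : Type u₁} [Category.{v} C] {X Y : C} (ξ : X ⟶ Y) {L M : C} (a : L ≅ M)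
    (h : CClass ξ L) : CClass ξ M := by
  intro g
  obtain ⟨k, hk⟩ := h (a.hom ≫ g)
  refine ⟨a.inv ≫ k, ?_⟩
  dsimp at hk ⊢
  rw [Category.assoc, hk, Iso.inv_hom_id_assoc]

theorem cogen_iso {C : Type u₁} [Category.{v} C] [HasProducts.{v} C] (X : C) {L M : C} (a : L ≅ M)
    (h : Cogen X L) : Cogen X M := by
  obtain ⟨I, m, hm⟩ := h
  exact ⟨I, a.inv ≫ m, inferInstance⟩

theorem cclass_adj {A : Type u₁} {B : Type u₂} [Category.{v} A] [Category.{v} B]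
    {e : A ⥤ B} {r : B ⥤ A} (adjr : e ⊣ r) {X Y : B} (ξ : X ⟶ Y) (L : A) :
    CClass (r.map ξ) L ↔ CClass ξ (e.obj L) := by
  constructor
  · intro h g
    obtain ⟨k, hk⟩ := h (adjr.homEquiv _ _ g)
    refine ⟨(adjr.homEquiv _ _).symm k, ?_⟩
    dsimp only at hk ⊢
    rw [← adjr.homEquiv_naturality_right_symm, hk, Equiv.symm_apply_apply]
  · intro h g
    obtain ⟨k, hk⟩ := h ((adjr.homEquiv _ _).symm g)
    refine ⟨(adjr.homEquiv _ _) k, ?_⟩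
    dsimp only at hk ⊢
    rw [← adjr.homEquiv_naturality_right, hk, Equiv.apply_symm_apply]

theorem split_aux {A : Type u₁} {B : Type u₂} [Category.{v} A] [Category.{v} B]
    [Abelian A] [Abelian B] {e : A ⥤ B} {r : B ⥤ A} [PreservesFiniteColimits e]
    [e.PreservesZeroMorphisms] (adjr : e ⊣ r) (M : A) :
    ∃ s : e.obj (cokernel (adjr.unit.app M)) ⟶ e.obj (r.obj (e.obj M)),
      e.map (cokernel.π (adjr.unit.app M)) ≫ s =
        𝟙 _ - adjr.counit.app (e.obj M) ≫ e.map (adjr.unit.app M) ∧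
      s ≫ e.map (cokernel.π (adjr.unit.app M)) = 𝟙 _ := by
  have hc := isColimitCoforkMapOfIsColimit' e (cokernel.condition (adjr.unit.app M))
    (cokernelIsCokernel (adjr.unit.app M))
  obtain ⟨s, hs⟩ := CokernelCofork.IsColimit.desc' hc
    (𝟙 _ - adjr.counit.app (e.obj M) ≫ e.map (adjr.unit.app M)) (by
      have h := adjr.left_triangle_components M =≫ e.map (adjr.unit.app M)
      rw [Category.assoc] at h
      rw [Preadditive.comp_sub, sub_eq_zero]
      refine (Category.comp_id _).trans ?_
      exact ((Category.id_comp _).symm.trans h.symm))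
  have hs' : e.map (cokernel.π (adjr.unit.app M)) ≫ s =
        𝟙 _ - adjr.counit.app (e.obj M) ≫ e.map (adjr.unit.app M) := hs
  refine ⟨s, hs', ?_⟩
  rw [← cancel_epi (e.map (cokernel.π (adjr.unit.app M))), ← Category.assoc, hs',
    Preadditive.sub_comp, Category.assoc, ← e.map_comp, cokernel.condition]
  simp

theorem cogen_r {A : Type u₁} {B : Type u₂} [Category.{v} A] [Category.{v} B]
    [Abelian A] [Abelian B] [HasProducts.{v} A] [HasProducts.{v} B]
    {e : A ⥤ B} {r : B ⥤ A} [e.Faithful] [e.PreservesZeroMorphisms]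
    (adjr : e ⊣ r) (X : B) (L : A) (h : Cogen X (e.obj L)) : Cogen (r.obj X) L := by
  rw [cogen_iff] at h ⊢
  intro Z f hf
  apply e.map_injective
  rw [e.map_zero]
  refine h _ _ fun g => ?_
  have := hf (adjr.homEquiv _ _ g)
  rw [← adjr.homEquiv_naturality_left] at this
  apply (adjr.homEquiv _ _).injective
  rw [this, adjr.homEquiv_unit]
  have : r.PreservesZeroMorphisms := by
    have := adjr.isRightAdjoint
    infer_instance
  simp

/-- Let `(B, A, i, e, l)` be a cleft extension of abelian categories with
enough injectives and arbitrary products, and suppose `e` has a right adjoint functor `r`. Let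
`0 ⟶ Bo ⟶ι E⁰ ⟶ξ E¹` be an injective copresentation of `Bo` in `B`. Then `r(Bo)` is cosilting
in `A` with respect to `r(ξ)` if and only if `Bo` is cosilting in `B` with respect to `ξ` and
`F'(Bo) ∈ Cogen(Bo)`, where `F'(Bo) := e(coker(ν_{i(Bo)}))` and `ν : 𝟭 A ⟶ e ⋙ r` is the unit
of the adjoint pair `(e, r)`. -/
theorem stmt17 {A : Type u₁} {B : Type u₂} [Category.{v} A] [Category.{v} B]
    [Abelian A] [Abelian B] [EnoughProjectives A] [EnoughProjectives B]
    [EnoughInjectives A] [EnoughInjectives B]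
    [HasProducts.{v} A] [HasProducts.{v} B]
    (i : B ⥤ A) (e : A ⥤ B) (l : B ⥤ A) [e.Faithful]
    [PreservesFiniteLimits e] [PreservesFiniteColimits e]
    (adj : l ⊣ e) (η : i ⋙ e ≅ 𝟭 B)
    (r : B ⥤ A) (adjr : e ⊣ r)
    {Bo E₀ E₁ : B} (ι : Bo ⟶ E₀) (ξ : E₀ ⟶ E₁)
    (hE₀ : Injective E₀) (hE₁ : Injective E₁) [Mono ι]
    (w : ι ≫ ξ = 0) (hexact : (ShortComplex.mk ι ξ w).Exact) :
    IsCosilting (r.map ξ) (r.obj Bo) ↔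
      IsCosilting ξ Bo ∧ Cogen Bo (e.obj (cokernel (adjr.unit.app (i.obj Bo)))) := by
  have : e.PreservesZeroMorphisms := by
    have := adjr.isLeftAdjoint
    infer_instance
  have : r.PreservesZeroMorphisms := by
    have := adjr.isRightAdjoint
    infer_instance
  have : l.PreservesZeroMorphisms := by
    have := adj.isLeftAdjoint
    infer_instance
  have a : ∀ M, e.obj (i.obj M) ≅ M := fun M => η.app M
  obtain ⟨s, hs1, hs2⟩ := split_aux adjr (i.obj Bo)
  constructor
  · intro H
    have hcos : IsCosilting ξ Bo := by
      intro M
      constructor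
      · intro hM
        exact cclass_iso ξ (a M) ((cclass_adj adjr ξ _).1 ((H _).1
          (cogen_r adjr _ _ (cogen_iso _ (a M).symm hM))))
      · intro hM
        have h1 := (H _).2 ((cclass_adj adjr ξ _).2 (cclass_iso ξ (a M).symm hM))
        rw [cogen_iff] at h1 ⊢
        intro Z f hf
        have h2 : i.map f = 0 := by
          refine h1 _ _ fun g => ?_
          apply (adjr.homEquiv _ _).symm.injective
          rw [adjr.homEquiv_naturality_left_symm]
          have h3 := η.hom.naturality f
          have h4 := hf (η.inv.app M ≫ (adjr.homEquiv _ _).symm g)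
          have h5 : e.map (i.map f) = η.hom.app Z ≫ f ≫ η.inv.app M := by
            have := h3 =≫ η.inv.app M
            simpa using this
          rw [h5, Category.assoc, Category.assoc, h4, comp_zero, adjr.homEquiv_counit]
          simp
        have h3 := η.hom.naturality f
        have h4 : η.hom.app Z ≫ f = 0 := by
          have : e.map (i.map f) = 0 := by rw [h2, e.map_zero]
          simpa [this] using h3.symm
        exact (cancel_epi (η.hom.app Z)).1 (by rw [h4, comp_zero])
    refine ⟨hcos, (hcos _).2 ?_⟩
    have h1 : Cogen (r.obj Bo) (r.obj Bo) := by
      rw [cogen_iff]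
      intro Z f hf
      simpa using hf (𝟙 _)
    have h2 := (cclass_adj adjr ξ _).1 ((H _).1 h1)
    have h3 := cclass_iso ξ (e.mapIso (r.mapIso (a Bo).symm)) h2
    intro g
    obtain ⟨k, hk⟩ := h3 (e.map (cokernel.π (adjr.unit.app (i.obj Bo))) ≫ g)
    refine ⟨s ≫ k, ?_⟩
    dsimp only at hk ⊢
    rw [Category.assoc, hk, ← Category.assoc, hs2, Category.id_comp]
  · rintro ⟨hcos, hF⟩ L
    rw [cclass_adj adjr, ← hcos]
    refine ⟨fun h => ?_, cogen_r adjr _ _⟩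
    have her : Cogen Bo (e.obj (r.obj Bo)) := by
      refine cogen_iso _ (e.mapIso (r.mapIso (a Bo))) ?_
      rw [cogen_iff] at hF ⊢
      intro Z f hf
      have h1 : f ≫ adjr.counit.app (e.obj (i.obj Bo)) = 0 := by
        rw [← cancel_mono (a Bo).hom, Category.assoc, zero_comp]
        exact hf _
      have h2 : f ≫ e.map (cokernel.π (adjr.unit.app (i.obj Bo))) = 0 := by
        refine hF _ _ fun g => ?_
        rw [Category.assoc]
        exact hf _
      have h3 := f ≫= hs1
      rw [← Category.assoc, h2, zero_comp, Preadditive.comp_sub, ← Category.assoc, h1,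
        zero_comp, sub_zero] at h3
      simpa using h3.symm
    rw [cogen_iff] at h her ⊢
    intro Z f hf
    have h0 : (adj.homEquiv _ _).symm f = 0 := by
      refine h _ _ fun g => ?_
      rw [← adj.homEquiv_naturality_right_symm]
      have : f ≫ e.map g = 0 := by
        refine her _ _ fun k => ?_
        rw [Category.assoc]
        exact hf _
      rw [this, adj.homEquiv_counit]
      simp
    have := congrArg (adj.homEquiv _ _) h0
    rw [Equiv.apply_symm_apply] at this
    rw [this, adj.homEquiv_unit]
    simp
end
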